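/- Let H = (V, E) be a finite k-uniform hypergraph with at least one edge, X its family of maximal independent sets, and F = {S_{{v}} : v ∈ V}. Then the Helly number of the set system (X, F) equals k; moreover, h(X, C)_H = h(X, F) and h_c(X, C)_H = h_c(X, F), where (X, C)_H is the associated convexity space of H. -/

import Mathlib

open scoped Classical

universe u

section SetSystems

variable {X : Type*}

/-- A finite family of sets is intersecting if all of its members have a common element. -/
def IsIntersecting (F : Finset (Set X)) : Prop :=
  ∃ x, ∀ K ∈ F, x ∈ K

/-- A convexity space: `∅` and the whole space are convex, convexity is closed under
arbitrary (nonempty) intersections and under unions of (nonempty) chains. -/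
def IsConvexitySpace (C : Set (Set X)) : Prop :=
  ∅ ∈ C ∧ Set.univ ∈ C ∧
    (∀ D ⊆ C, D.Nonempty → ⋂₀ D ∈ C) ∧
    (∀ D ⊆ C, D.Nonempty → IsChain (· ⊆ ·) D → ⋃₀ D ∈ C)

/-- The convex hull of `Y`: intersection of all convex sets containing `Y`. -/
def convHull (C : Set (Set X)) (Y : Set X) : Set X :=
  ⋂₀ {K | K ∈ C ∧ Y ⊆ K}

/-- `Y` admits a Radon partition: a partition into two disjoint parts whose hulls meet. -/
def HasRadonPartition (C : Set (Set X)) (Y : Finset X) : Prop :=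
  ∃ A B : Finset X, (↑A ∪ ↑B : Set X) = ↑Y ∧ Disjoint (↑A : Set X) (↑B : Set X) ∧
    (convHull C ↑A ∩ convHull C ↑B).Nonempty

/-- The Radon number is at most `n`: every finite subset of size at least `n`
admits a Radon partition. -/
def RadonLE (C : Set (Set X)) (n : ℕ) : Prop :=
  ∀ Y : Finset X, n ≤ Y.card → HasRadonPartition C Y

/-- `Y` admits a Tverberg `k`-partition: a partition into `k` pairwise disjoint parts
whose hulls have a common point. -/
def HasTverbergPartition (C : Set (Set X)) (k : ℕ) (Y : Finset X) : Prop :=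
  ∃ P : Fin k → Finset X, (⋃ i, (↑(P i) : Set X)) = ↑Y ∧
    (∀ i j, i ≠ j → Disjoint (↑(P i) : Set X) (↑(P j) : Set X)) ∧
    (⋂ i, convHull C ↑(P i)).Nonempty

/-- A minimally non-intersecting family: not intersecting, but every proper subfamily
obtained by deleting one member is intersecting. -/
def MinNonIntersecting (F : Finset (Set X)) : Prop :=
  ¬ IsIntersecting F ∧ ∀ K ∈ F, IsIntersecting (F.erase K)

/-- The Helly number of the set system `S` is at most `n`. -/
def HellyLE (S : Set (Set X)) (n : ℕ) : Prop :=
  ∀ F : Finset (Set X), ↑F ⊆ S → MinNonIntersecting F → F.card ≤ n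

/-- The colorful Helly number of the set system `S` is at most `m`. -/
def ColorfulHellyLE (S : Set (Set X)) (m : ℕ) : Prop :=
  ∀ F : Fin m → Finset (Set X), (∀ i, ↑(F i) ⊆ S) →
    (∀ K : Fin m → Set X, (∀ i, K i ∈ F i) → (⋂ i, K i).Nonempty) →
    ∃ i, IsIntersecting (F i)

/-- `S` satisfies the fractional Helly property for `k`-tuples with function `β`. -/
def FracHelly (S : Set (Set X)) (k : ℕ) (β : ℝ → ℝ) : Prop :=
  ∀ α ∈ Set.Ioo (0 : ℝ) 1, ∀ F : Finset (Set X), ↑F ⊆ S →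
    α * (F.card.choose k : ℝ) ≤
      (((F.powersetCard k).filter (fun G => IsIntersecting G)).card : ℝ) →
    ∃ G ⊆ F, IsIntersecting G ∧ β α * (F.card : ℝ) ≤ (G.card : ℝ)

/-- The transversal number of the finite family `F` is at most `n`: `F` can be
partitioned into (at most) `n` intersecting subfamilies. -/
def TransversalLE (F : Finset (Set X)) (n : ℕ) : Prop :=
  ∃ P : Fin n → Finset (Set X), (∀ i, P i ⊆ F) ∧ (∀ K ∈ F, ∃! i, K ∈ P i) ∧
    ∀ i, (P i).Nonempty → IsIntersecting (P i)

/-- The fractional transversal number of `F` is at most `t`: there is a finitely supported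
fractional transversal of total weight at most `t`. -/
def FracTransversalLE (F : Finset (Set X)) (t : ℝ) : Prop :=
  ∃ f : X →₀ ℝ, (∀ x, 0 ≤ f x ∧ f x ≤ 1) ∧
    (∀ S ∈ F, 1 ≤ ∑ x ∈ f.support.filter (fun x => x ∈ S), f x) ∧
    (∑ x ∈ f.support, f x) ≤ t

/-- The weak ε-net property: there is a function `g` bounding the transversal number of
every finite subfamily in terms of its fractional transversal number. -/
def WeakEpsNetProp (S : Set (Set X)) : Prop :=
  ∃ g : ℝ → ℕ, ∀ F : Finset (Set X), ↑F ⊆ S → ∀ t : ℝ,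
    FracTransversalLE F t → (∀ s : ℝ, FracTransversalLE F s → t ≤ s) →
    TransversalLE F (g t)

/-- The `(p,q)`-property: among any `p` members (with repetition allowed) some `q`
of them are intersecting. -/
def PQProperty (F : Finset (Set X)) (p q : ℕ) : Prop :=
  ∀ K : Fin p → Set X, (∀ i, K i ∈ F) →
    ∃ s : Finset (Fin p), s.card = q ∧ ∃ x, ∀ i ∈ s, x ∈ K i

/-- A compact set system: every subsystem with empty total intersection contains a
finite subfamily with empty intersection. -/
def CompactSystem (S : Set (Set X)) : Prop :=
  ∀ T ⊆ S, ⋂₀ T = ∅ → ∃ F : Finset (Set X), ↑F ⊆ T ∧ ⋂₀ (↑F : Set (Set X)) = ∅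

/-- The VC-dimension of `S` is at most `d`: every finite set shattered by `S` has
size at most `d`. -/
def VCDimLE (S : Set (Set X)) (d : ℕ) : Prop :=
  ∀ Y : Finset X, (∀ Z ⊆ Y, ∃ K ∈ S, (↑Y : Set X) ∩ K = ↑Z) → Y.card ≤ d

/-- `S^∩`: all intersections of nonempty subcollections of `S`. -/
def interClosure (S : Set (Set X)) : Set (Set X) :=
  {T | ∃ D ⊆ S, D.Nonempty ∧ T = ⋂₀ D}

end SetSystems

section Hypergraphs

variable {V : Type*} [DecidableEq V]

/-- An independent set of the hypergraph with edge set `E`: contains no edge. -/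
def IsIndep (E : Finset (Finset V)) (I : Set V) : Prop :=
  ∀ e ∈ E, ¬ ((↑e : Set V) ⊆ I)

/-- A maximal independent set. -/
def IsMaxIndep (E : Finset (Finset V)) (I : Set V) : Prop :=
  IsIndep E I ∧ ∀ J : Set V, IsIndep E J → I ⊆ J → J = I

/-- The ground set of the associated convexity space: the maximal independent sets. -/
abbrev MIS (E : Finset (Finset V)) : Type _ := {σ : Set V // IsMaxIndep E σ}

/-- `S_W`: the maximal independent sets containing `W`. -/
def SW (E : Finset (Finset V)) (W : Set V) : Set (MIS E) :=
  {σ : MIS E | W ⊆ σ.1}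

/-- The associated convexity space of the hypergraph with edge set `E`. -/
def assocC (E : Finset (Finset V)) : Set (Set (MIS E)) :=
  {T | ∃ W : Set V, T = SW E W}

/-- Property `T_k(m)`: among any `m` (not necessarily distinct) edges, some `k` of them
admit a system of distinct representatives which is an edge. -/
def PropT (E : Finset (Finset V)) (k m : ℕ) : Prop :=
  ∀ e : Fin m → Finset V, (∀ i, e i ∈ E) →
    ∃ (g : Fin k → Fin m) (v : Fin k → V), StrictMono g ∧ Function.Injective v ∧
      (∀ j, v j ∈ e (g j)) ∧ Finset.image v Finset.univ ∈ E

/-- The chromatic number of the hypergraph is at most `n`: the vertex set can be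
partitioned into (at most) `n` independent sets. -/
def ChromaticLE (E : Finset (Finset V)) (n : ℕ) : Prop :=
  ∃ P : Fin n → Set V, (∀ v : V, ∃! i, v ∈ P i) ∧
    ∀ i, (P i).Nonempty → IsIndep E (P i)

/-- The clique number is at most `w`: every set of vertices all of whose `k`-element
subsets are edges has size at most `w`. -/
def CliqueNumLE (E : Finset (Finset V)) (k w : ℕ) : Prop :=
  ∀ Q : Finset V, (∀ q ⊆ Q, q.card = k → q ∈ E) → Q.card ≤ w

/-- Property `δ_k(m)`: any sunflower of `m` edges contains `k` edges admitting a system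
of distinct representatives which is an edge. -/
def PropDelta (E : Finset (Finset V)) (k m : ℕ) : Prop :=
  ∀ G : Finset (Finset V), G ⊆ E → G.card = m →
    (∃ S : Finset V, ∀ e ∈ G, ∀ e' ∈ G, e ≠ e' → e ∩ e' = S) →
    ∃ (f : Fin k → Finset V) (v : Fin k → V), Function.Injective f ∧ (∀ j, f j ∈ G) ∧
      Function.Injective v ∧ (∀ j, v j ∈ f j) ∧ Finset.image v Finset.univ ∈ E

end Hypergraphs

/-!
The crux is that `S_W` is nonempty exactly when `W` is independent. Hence a family of sets
`S_{{v}}` has empty intersection exactly when its vertices contain an edge, which makes the system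
`F` of these sets compact and identifies its minimally non-intersecting families with the
inclusion-minimal edges. The comparison with the convexity space is a general fact about the closure
of a compact set system under intersections: that a finite family in the closure is not intersecting
is witnessed by finitely many sets of the system, each containing a member of the family.
-/

section SetSystems

variable {X : Type*} {S T : Set (Set X)} {F G : Finset (Set X)}

theorem sInter_coe_eq_empty_iff : ⋂₀ (F : Set (Set X)) = ∅ ↔ ¬IsIntersecting F := by
  rw [← Set.not_nonempty_iff_eq_empty]
  rfl

theorem IsIntersecting.mono (hF : IsIntersecting F) (hGF : G ⊆ F) : IsIntersecting G :=
  hF.imp fun _ hx K hK => hx K (hGF hK)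

theorem MinNonIntersecting.eq_of_subset (hF : MinNonIntersecting F) (hGF : G ⊆ F)
    (hG : ¬IsIntersecting G) : G = F := by
  refine hGF.antisymm fun K hK => ?_
  by_contra hKG
  exact hG ((hF.2 K hK).mono (Finset.subset_erase.2 ⟨hGF, hKG⟩))

theorem exists_subset_minNonIntersecting (hF : ¬IsIntersecting F) :
    ∃ G ⊆ F, MinNonIntersecting G := by
  obtain ⟨G, hGF, hG⟩ :=
    exists_minimal_le_of_wellFoundedLT (fun G : Finset (Set X) => ¬IsIntersecting G) F hF
  exact ⟨G, hGF, hG.prop, fun K hK => not_not.1 (hG.not_prop_of_lt (Finset.erase_ssubset hK))⟩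

theorem HellyLE.mono {n : ℕ} (hT : HellyLE T n) (hST : S ⊆ T) : HellyLE S n :=
  fun F hF => hT F (hF.trans hST)

theorem ColorfulHellyLE.mono {m : ℕ} (hT : ColorfulHellyLE T m) (hST : S ⊆ T) :
    ColorfulHellyLE S m :=
  fun F hF => hT F fun i => (hF i).trans hST

/-- The family of all intersections of subcollections of `S`. Unlike `interClosure`, it always
contains the whole space, as the intersection of the empty subcollection; this matches `S_∅` being
a member of the associated convexity space. -/
def sInterClosure (S : Set (Set X)) : Set (Set X) :=
  {K | ∃ D ⊆ S, K = ⋂₀ D}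

theorem subset_sInterClosure : S ⊆ sInterClosure S :=
  fun K hK => ⟨{K}, Set.singleton_subset_iff.2 hK, (Set.sInter_singleton K).symm⟩

theorem CompactSystem.exists_finset_not_isIntersecting (hS : CompactSystem S)
    (hFS : ↑F ⊆ sInterClosure S) (hF : ¬IsIntersecting F) :
    ∃ G : Finset (Set X), ↑G ⊆ S ∧ (∀ T ∈ G, ∃ K ∈ F, K ⊆ T) ∧ ¬IsIntersecting G := by
  have hempty : ⋂₀ {T ∈ S | ∃ K ∈ F, K ⊆ T} = ∅ := by
    refine Set.eq_empty_of_forall_notMem fun x hx => hF ⟨x, fun K hK => ?_⟩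
    obtain ⟨D, hDS, rfl⟩ := hFS hK
    exact fun T hT => hx T ⟨hDS hT, _, hK, Set.sInter_subset_of_mem hT⟩
  obtain ⟨G, hG, hG_empty⟩ := hS _ (Set.sep_subset _ _) hempty
  exact ⟨G, fun T hT => (hG hT).1, fun T hT => (hG hT).2, sInter_coe_eq_empty_iff.1 hG_empty⟩

theorem MinNonIntersecting.card_le_of_forall_exists_subset (hF : MinNonIntersecting F)
    (hG : ¬IsIntersecting G) (hFG : ∀ T ∈ G, ∃ K ∈ F, K ⊆ T) : F.card ≤ G.card := by
  -- A point common to all members of `F` but `K` lies in every set above another member, so a set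
  -- of `G` that misses it lies above no member of `F` except `K`.
  have hsep : ∀ K ∈ F, ∃ T ∈ G, ∀ L ∈ F, L ⊆ T → L = K := by
    intro K hK
    obtain ⟨x, hx⟩ := hF.2 K hK
    obtain ⟨T, hT, hxT⟩ : ∃ T ∈ G, x ∉ T := by
      by_contra! h
      exact hG ⟨x, h⟩
    refine ⟨T, hT, fun L hL hLT => ?_⟩
    by_contra hLK
    exact hxT (hLT (hx L (Finset.mem_erase.2 ⟨hLK, hL⟩)))
  choose! t htG ht using hsep
  refine Finset.card_le_card_of_injOn t htG fun K hK L hL hKL => ?_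
  obtain ⟨M, hM, hMt⟩ := hFG (t K) (htG K hK)
  exact (ht K hK M hM hMt).symm.trans (ht L hL M hM (hKL ▸ hMt))

theorem CompactSystem.hellyLE_sInterClosure_iff (hS : CompactSystem S) {n : ℕ} :
    HellyLE (sInterClosure S) n ↔ HellyLE S n := by
  refine ⟨fun h => h.mono subset_sInterClosure, fun h F hFS hF => ?_⟩
  obtain ⟨G, hGS, hFG, hG⟩ := hS.exists_finset_not_isIntersecting hFS hF.1
  obtain ⟨G', hG'G, hG'⟩ := exists_subset_minNonIntersecting hG
  calc
    F.card ≤ G'.card :=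
      hF.card_le_of_forall_exists_subset hG'.1 fun T hT => hFG T (hG'G hT)
    _ ≤ n := h G' ((Finset.coe_subset.2 hG'G).trans hGS) hG'

theorem CompactSystem.colorfulHellyLE_sInterClosure_iff (hS : CompactSystem S) {m : ℕ} :
    ColorfulHellyLE (sInterClosure S) m ↔ ColorfulHellyLE S m := by
  refine ⟨fun h => h.mono subset_sInterClosure, fun h F hFS hF => ?_⟩
  by_contra! hnot
  choose G hGS hFG hG using fun i => hS.exists_finset_not_isIntersecting (hFS i) (hnot i)
  have hrainbow : ∀ T : Fin m → Set X, (∀ i, T i ∈ G i) → (⋂ i, T i).Nonempty := by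
    intro T hT
    choose K hKF hKT using fun i => hFG i (T i) (hT i)
    exact (hF K hKF).mono (Set.iInter_mono hKT)
  obtain ⟨i, hi⟩ := h G hGS hrainbow
  exact hG i hi

end SetSystems

section Hypergraphs

variable {V : Type*} {E : Finset (Finset V)}

theorem IsIndep.mono {I J : Set V} (hJ : IsIndep E J) (hIJ : I ⊆ J) : IsIndep E I :=
  fun e he heI => hJ e he (heI.trans hIJ)

theorem IsIndep.sUnion {c : Set (Set V)} (hc : ∀ I ∈ c, IsIndep E I)
    (hdir : DirectedOn (· ⊆ ·) c) (hne : c.Nonempty) : IsIndep E (⋃₀ c) := by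
  intro e he hec
  obtain ⟨I, hI, heI⟩ :=
    hdir.exists_mem_subset_of_finite_of_subset_sUnion hne e.finite_toSet hec
  exact hc I hI e he heI

theorem IsIndep.exists_isMaxIndep_superset {I : Set V} (hI : IsIndep E I) :
    ∃ σ, IsMaxIndep E σ ∧ I ⊆ σ := by
  obtain ⟨σ, hIσ, hσ⟩ := zorn_subset_nonempty {J | IsIndep E J}
    (fun c hc hchain hne =>
      ⟨⋃₀ c, IsIndep.sUnion hc hchain.directedOn hne, fun _ => Set.subset_sUnion_of_mem⟩) I hI
  exact ⟨σ, ⟨hσ.prop, fun J hJ hσJ => (hσ.eq_of_subset hJ hσJ).symm⟩, hIσ⟩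

theorem isIndep_erase_of_minimal {e : Finset V} (he : Minimal (· ∈ E) e) {v : V} (hv : v ∈ e) :
    IsIndep E (e.erase v) :=
  fun _ hf hfe =>
    he.not_prop_of_lt ((Finset.coe_subset.1 hfe).trans_ssubset (Finset.erase_ssubset hv)) hf

theorem mem_SW_singleton {v : V} {σ : MIS E} : σ ∈ SW E {v} ↔ v ∈ σ.1 :=
  Set.singleton_subset_iff

theorem SW_nonempty_iff {W : Set V} : (SW E W).Nonempty ↔ IsIndep E W := by
  refine ⟨fun ⟨σ, hWσ⟩ => σ.2.1.mono hWσ, fun hW => ?_⟩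
  obtain ⟨σ, hσ, hWσ⟩ := hW.exists_isMaxIndep_superset
  exact ⟨⟨σ, hσ⟩, hWσ⟩

variable (E) in
/-- The set system `F = {S_{{v}} : v ∈ V}` on the maximal independent sets. -/
def vertexSystem : Set (Set (MIS E)) :=
  {T | ∃ v : V, T = SW E {v}}

variable (E) in
/-- The finite subfamily `{S_{{v}} : v ∈ A}` of the vertex system given by a finite set `A` of
vertices. -/
noncomputable def vertexFamily (A : Finset V) : Finset (Set (MIS E)) :=
  A.image fun v => SW E {v}

theorem coe_vertexFamily_subset_iff {A : Finset V} {T : Set (Set (MIS E))} :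
    ↑(vertexFamily E A) ⊆ T ↔ ∀ v ∈ A, SW E {v} ∈ T := by
  simp only [vertexFamily, Finset.coe_image, Set.image_subset_iff]
  rfl

theorem vertexFamily_subset_vertexSystem {A : Finset V} : ↑(vertexFamily E A) ⊆ vertexSystem E :=
  coe_vertexFamily_subset_iff.2 fun v _ => ⟨v, rfl⟩

theorem isIntersecting_vertexFamily_iff {A : Finset V} :
    IsIntersecting (vertexFamily E A) ↔ IsIndep E A := by
  simp only [← SW_nonempty_iff, IsIntersecting, vertexFamily, Finset.forall_mem_image,
    mem_SW_singleton]
  rfl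

theorem assocC_eq_sInterClosure : assocC E = sInterClosure (vertexSystem E) := by
  ext K
  constructor
  · rintro ⟨W, rfl⟩
    refine ⟨(fun v => SW E {v}) '' W, Set.image_subset_iff.2 fun v _ => ⟨v, rfl⟩, ?_⟩
    ext σ
    simp only [Set.sInter_image, Set.mem_iInter, mem_SW_singleton]
    rfl
  · rintro ⟨D, hD, rfl⟩
    refine ⟨{v | SW E {v} ∈ D}, Set.ext fun σ => ⟨fun hσ v hv => ?_, fun hσ T hT => ?_⟩⟩
    · exact mem_SW_singleton.1 (hσ _ hv)
    · obtain ⟨v, rfl⟩ := hD hT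
      exact mem_SW_singleton.2 (hσ hT)

theorem exists_minimal_edge_of_sInter_eq_empty {T : Set (Set (MIS E))} (hT : T ⊆ vertexSystem E)
    (hempty : ⋂₀ T = ∅) : ∃ e, Minimal (· ∈ E) e ∧ ↑(vertexFamily E e) ⊆ T := by
  have hdep : ¬IsIndep E {v | SW E {v} ∈ T} := by
    rw [← SW_nonempty_iff]
    rintro ⟨σ, hσ⟩
    refine Set.notMem_empty σ (hempty.subset fun K hK => ?_)
    obtain ⟨v, rfl⟩ := hT hK
    exact mem_SW_singleton.2 (hσ hK)
  obtain ⟨e, he, heT⟩ : ∃ e ∈ E, (e : Set V) ⊆ {v | SW E {v} ∈ T} := by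
    simpa only [IsIndep, not_forall, not_not, exists_prop] using hdep
  obtain ⟨f, hfe, hf⟩ := E.exists_le_minimal he
  exact ⟨f, hf, coe_vertexFamily_subset_iff.2 fun v hv => heT (hfe hv)⟩

theorem not_isIntersecting_vertexFamily {e : Finset V} (he : e ∈ E) :
    ¬IsIntersecting (vertexFamily E e) :=
  fun h => isIntersecting_vertexFamily_iff.1 h e he subset_rfl

theorem compactSystem_vertexSystem : CompactSystem (vertexSystem E) := by
  intro T hT hempty
  obtain ⟨e, he, heT⟩ := exists_minimal_edge_of_sInter_eq_empty hT hempty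
  exact ⟨vertexFamily E e, heT,
    sInter_coe_eq_empty_iff.2 (not_isIntersecting_vertexFamily he.prop)⟩

theorem injOn_SW_singleton_of_minimal {e : Finset V} (he : Minimal (· ∈ E) e) :
    Set.InjOn (fun v => SW E {v}) e := by
  intro v hv w hw (hvw : SW E {v} = SW E {w})
  by_contra hne
  obtain ⟨σ, hσ⟩ := SW_nonempty_iff.2 (isIndep_erase_of_minimal he hw)
  have hvσ : v ∈ σ.1 := hσ (Finset.mem_erase.2 ⟨hne, hv⟩)
  have hwσ : w ∈ σ.1 := mem_SW_singleton.1 (hvw ▸ mem_SW_singleton.2 hvσ)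
  refine σ.2.1 e he.prop ?_
  rw [← Finset.insert_erase hw, Finset.coe_insert]
  exact Set.insert_subset hwσ hσ

theorem card_vertexFamily_of_minimal {e : Finset V} (he : Minimal (· ∈ E) e) :
    (vertexFamily E e).card = e.card :=
  Finset.card_image_of_injOn (injOn_SW_singleton_of_minimal he)

theorem minNonIntersecting_vertexFamily_of_minimal {e : Finset V} (he : Minimal (· ∈ E) e) :
    MinNonIntersecting (vertexFamily E e) := by
  refine ⟨not_isIntersecting_vertexFamily he.prop, Finset.forall_mem_image.2 fun v hv => ?_⟩
  have herase : IsIntersecting (vertexFamily E (e.erase v)) :=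
    isIntersecting_vertexFamily_iff.2 (isIndep_erase_of_minimal he hv)
  exact herase.mono (Finset.erase_image_subset_image_erase _ e v)

theorem hellyLE_vertexSystem {k : ℕ} (hk : ∀ e, Minimal (· ∈ E) e → e.card ≤ k) :
    HellyLE (vertexSystem E) k := by
  intro F hFS hF
  obtain ⟨e, he, heF⟩ :=
    exists_minimal_edge_of_sInter_eq_empty hFS (sInter_coe_eq_empty_iff.2 hF.1)
  rw [← hF.eq_of_subset (Finset.coe_subset.1 heF) (not_isIntersecting_vertexFamily he.prop),
    card_vertexFamily_of_minimal he]
  exact hk e he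

end Hypergraphs

theorem helly_number_of_vertex_system_general {V : Type*} (k : ℕ) (E : Finset (Finset V))
    (hk : IsGreatest (Finset.card '' {e | Minimal (· ∈ E) e}) k) :
    (∃ G : Finset (Set (MIS E)), ↑G ⊆ vertexSystem E ∧ G.card = k ∧ MinNonIntersecting G) ∧
    HellyLE (vertexSystem E) k ∧
    (∀ n : ℕ, HellyLE (assocC E) n ↔ HellyLE (vertexSystem E) n) ∧
    (∀ m : ℕ, ColorfulHellyLE (assocC E) m ↔ ColorfulHellyLE (vertexSystem E) m) := by
  obtain ⟨⟨e, he, rfl⟩, hmax⟩ := hk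
  rw [assocC_eq_sInterClosure]
  exact ⟨⟨vertexFamily E e, vertexFamily_subset_vertexSystem, card_vertexFamily_of_minimal he,
      minNonIntersecting_vertexFamily_of_minimal he⟩,
    hellyLE_vertexSystem fun f hf => hmax ⟨f, hf, rfl⟩,
    fun _ => compactSystem_vertexSystem.hellyLE_sInterClosure_iff,
    fun _ => compactSystem_vertexSystem.colorfulHellyLE_sInterClosure_iff⟩

/-- For a `k`-uniform hypergraph with at least one edge, the Helly number of
the system `F = {S_{{v}} : v ∈ V}` equals `k`; moreover, the Helly and colorful Helly
numbers of the associated convexity space agree with those of `(X, F)`. -/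
theorem helly_number_of_vertex_system {V : Type u} [Fintype V] [DecidableEq V] (k : ℕ)
    (E : Finset (Finset V)) (hunif : ∀ e ∈ E, e.card = k) (hne : E.Nonempty) :
    (∃ G : Finset (Set (MIS E)),
        ↑G ⊆ {T : Set (MIS E) | ∃ v : V, T = SW E {v}} ∧ G.card = k ∧
        MinNonIntersecting G) ∧
    HellyLE {T : Set (MIS E) | ∃ v : V, T = SW E {v}} k ∧
    (∀ n : ℕ, HellyLE (assocC E) n ↔
      HellyLE {T : Set (MIS E) | ∃ v : V, T = SW E {v}} n) ∧
    (∀ m : ℕ, ColorfulHellyLE (assocC E) m ↔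
      ColorfulHellyLE {T : Set (MIS E) | ∃ v : V, T = SW E {v}} m) := by
  obtain ⟨e, he⟩ := hne
  exact helly_number_of_vertex_system_general k E
    ⟨⟨e, (Set.Sized.isAntichain hunif).minimal_mem_iff.2 he, hunif e he⟩,
      Set.forall_mem_image.2 fun f hf => (hunif f hf.prop).le⟩
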